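/- arXiv:2306.08932 — 3 statements merged into one kernel-verified Lean document; each statement's English description precedes it below -/
import Mathlib

section
/- For α, β ∈ reg(T), the following are equivalent: (1) there exist γ, δ ∈ reg(T) with αγ = β and βδ = α (i.e., β(x) = γ(α(x)) and α(x) = δ(β(x)) for all x ∈ X); (2) ker(α) = ker(β), i.e., for all x, y ∈ X, α(x) = α(y) if and only if β(x) = β(y). In other words, α and β are Green's R-related in the semigroup reg(T) if and only if they induce the same partition of X. -/
universe u

/-- The semigroup `T_{E*}(X)` of maps preserving `E` in both directions. -/
def TEstar {X : Type u} (E : Setoid X) : Set (X → X) :=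
  {α | ∀ x y : X, E.r x y ↔ E.r (α x) (α y)}

/-- The `E`-class of `x`. -/
def cls {X : Type u} (E : Setoid X) (x : X) : Set X := {y | E.r x y}

/-- The regular part `reg(T)` of `T_{E*}(X)`: every `E`-class meets the range. -/
def regT {X : Type u} (E : Setoid X) : Set (X → X) :=
  {α | α ∈ TEstar E ∧ ∀ x : X, (cls E x ∩ Set.range α).Nonempty}

theorem regT_factor {X : Type u} (E : Setoid X) (α β : X → X)
    (hα : α ∈ regT E) (hβ : β ∈ regT E) (h : ∀ x y : X, α x = α y → β x = β y) :
    ∃ γ ∈ regT E, γ ∘ α = β := by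
  have hp : ∀ z, ∃ p, E.r z (α p) ∧ ((∃ x, α x = z) → α p = z) := by
    intro z
    by_cases hz : ∃ x, α x = z
    · obtain ⟨x, rfl⟩ := hz
      exact ⟨x, E.iseqv.refl _, fun _ => rfl⟩
    · obtain ⟨_, hy, p, rfl⟩ := hα.2 z
      exact ⟨p, hy, fun h => absurd h hz⟩
  choose p hp1 hp2 using hp
  have hc : ∀ x, β (p (α x)) = β x := fun x => h _ _ (hp2 _ ⟨x, rfl⟩)
  refine ⟨fun z => β (p z), ⟨?_, ?_⟩, funext hc⟩
  · intro z w
    refine Iff.trans ?_ ((hα.1 (p z) (p w)).symm.trans (hβ.1 (p z) (p w)))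
    constructor
    · intro hzw
      exact E.iseqv.trans (E.iseqv.symm (hp1 z)) (E.iseqv.trans hzw (hp1 w))
    · intro hzw
      exact E.iseqv.trans (hp1 z) (E.iseqv.trans hzw (E.iseqv.symm (hp1 w)))
  · intro x
    obtain ⟨_, hy, q, rfl⟩ := hβ.2 x
    exact ⟨β q, hy, α q, hc q⟩

/-- Green's `R`-relation on `reg(T)`: `α R β` iff `ker α = ker β`. -/
theorem stmt3 {X : Type u} [Nonempty X] (E : Setoid X) (α β : X → X)
    (hα : α ∈ regT E) (hβ : β ∈ regT E) :
    (∃ γ ∈ regT E, ∃ δ ∈ regT E, γ ∘ α = β ∧ δ ∘ β = α) ↔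
      (∀ x y : X, α x = α y ↔ β x = β y) := by
  constructor
  · rintro ⟨γ, -, δ, -, h1, h2⟩ x y
    constructor
    · intro h
      rw [← h1]
      exact congrArg γ h
    · intro h
      rw [← h2]
      exact congrArg δ h
  · intro h
    obtain ⟨γ, hγ, h1⟩ := regT_factor E α β hα hβ (fun x y => (h x y).1)
    obtain ⟨δ, hδ, h2⟩ := regT_factor E β α hβ hα (fun x y => (h x y).2)
    exact ⟨γ, hγ, δ, hδ, h1, h2⟩
end

section
/- For α, β ∈ reg(T), the following are equivalent: (1) there exist γ, δ, γ', δ' ∈ reg(T) with γα = β, δβ = α, αγ' = β and βδ' = α (i.e., α and β are Green's H-related in reg(T)); (2) ker(α) = ker(β) and Xα = Xβ, i.e., α and β induce the same partition of X and have the same range. -/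
universe u

theorem exists_left {X : Type u} (E : Setoid X) (α β : X → X)
    (hα : α ∈ regT E) (hβ : β ∈ regT E) (h : Set.range β ⊆ Set.range α) :
    ∃ γ ∈ regT E, α ∘ γ = β := by
  have h1 : ∀ x, ∃ y, α y = β x := fun x => h ⟨x, rfl⟩
  choose γ hγ using h1
  refine ⟨γ, ⟨?_, ?_⟩, funext hγ⟩
  · intro x y
    rw [hα.1 (γ x) (γ y), hγ, hγ]
    exact hβ.1 x y
  · intro x
    obtain ⟨_, hz, y, rfl⟩ := hβ.2 (α x)
    refine ⟨γ y, ?_, y, rfl⟩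
    change E.r x (γ y)
    rw [hα.1 x (γ y), hγ]
    exact hz

theorem exists_right {X : Type u} (E : Setoid X) (α β : X → X)
    (hα : α ∈ regT E) (hβ : β ∈ regT E) (h : ∀ x y, α x = α y → β x = β y) :
    ∃ γ ∈ regT E, γ ∘ α = β := by
  have h1 : ∀ z, ∃ p, E.r z (α p) ∧ (z ∈ Set.range α → α p = z) := by
    intro z
    by_cases hz : z ∈ Set.range α
    · obtain ⟨p, rfl⟩ := hz
      exact ⟨p, E.refl _, fun _ => rfl⟩
    · obtain ⟨_, hw, p, rfl⟩ := hα.2 z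
      exact ⟨p, hw, fun h => absurd h hz⟩
  choose p hp hp2 using h1
  have key : ∀ x, β (p (α x)) = β x := fun x => h _ _ (hp2 _ ⟨x, rfl⟩)
  refine ⟨fun z => β (p z), ⟨?_, ?_⟩, funext key⟩
  · intro x y
    rw [← hβ.1 (p x) (p y), hα.1 (p x) (p y)]
    exact ⟨fun e => E.trans (E.symm (hp x)) (E.trans e (hp y)),
      fun e => E.trans (hp x) (E.trans e (E.symm (hp y)))⟩
  · intro x
    obtain ⟨_, hz, y, rfl⟩ := hβ.2 x
    exact ⟨β y, hz, α y, key y⟩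

/-- Green's `H`-relation on `reg(T)`: `α H β` iff `ker α = ker β` and `Xα = Xβ`. -/
theorem stmt4 {X : Type u} [Nonempty X] (E : Setoid X) (α β : X → X)
    (hα : α ∈ regT E) (hβ : β ∈ regT E) :
    ((∃ γ ∈ regT E, ∃ δ ∈ regT E, α ∘ γ = β ∧ β ∘ δ = α) ∧
     (∃ γ' ∈ regT E, ∃ δ' ∈ regT E, γ' ∘ α = β ∧ δ' ∘ β = α)) ↔
      ((∀ x y : X, α x = α y ↔ β x = β y) ∧ Set.range α = Set.range β) := by
  constructor
  · rintro ⟨⟨γ, -, δ, -, h1, h2⟩, γ', -, δ', -, h3, h4⟩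
    refine ⟨fun x y => ⟨fun h => ?_, fun h => ?_⟩, Set.Subset.antisymm ?_ ?_⟩
    · rw [← h3]; exact congrArg γ' h
    · rw [← h4]; exact congrArg δ' h
    · rw [← h2]; exact Set.range_comp_subset_range δ β
    · rw [← h1]; exact Set.range_comp_subset_range γ α
  · rintro ⟨hk, hr⟩
    obtain ⟨γ, hγ, h1⟩ := exists_left E α β hα hβ hr.ge
    obtain ⟨δ, hδ, h2⟩ := exists_left E β α hβ hα hr.le
    obtain ⟨γ', hγ', h3⟩ := exists_right E α β hα hβ fun x y => (hk x y).1
    obtain ⟨δ', hδ', h4⟩ := exists_right E β α hβ hα fun x y => (hk x y).2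
    exact ⟨⟨γ, hγ, δ, hδ, h1, h2⟩, γ', hγ', δ', hδ', h3, h4⟩
end

section
/- Suppose the set X/E of E-classes is finite. If J is a two-sided ideal of reg(T) that is principal, i.e., J = {λγμ : λ, μ ∈ reg(T)} for some γ ∈ J (as functions, J = {μ ∘ γ ∘ λ : λ, μ ∈ reg(T)}), then there exists a function s assigning to each E-class A a cardinal s(A) with 1 ≤ s(A) ≤ |A| such that J = Q(r) where r(A) = s(A)⁺ (the successor cardinal) for every E-class A. -/
universe u

/-- The `E`-class indexed by an element of the quotient `X/E`. -/
def clsQ {X : Type u} (E : Setoid X) (A : Quotient E) : Set X :=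
  {x | Quotient.mk E x = A}

/-- The ideal `Q(r)` of `reg(T)`. -/
def Qr {X : Type u} (E : Setoid X) (r : Quotient E → Cardinal.{u}) : Set (X → X) :=
  {α | α ∈ regT E ∧ ∃ σ : Quotient E ≃ Quotient E,
    ∀ A : Quotient E, Cardinal.mk ↥(α '' clsQ E A) < r (σ A)}

theorem regT_iff {X : Type u} (E : Setoid X) (α : X → X) :
    α ∈ regT E ↔ ∃ e : Quotient E ≃ Quotient E,
      ∀ x, Quotient.mk E (α x) = e (Quotient.mk E x) := by
  constructor
  · rintro ⟨h1, h2⟩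
    have hb : Function.Bijective
        (Quotient.map α (fun x y h => (h1 x y).1 h) : Quotient E → Quotient E) := by
      constructor
      · intro a b
        induction a using Quotient.inductionOn
        induction b using Quotient.inductionOn
        intro h
        exact Quotient.sound ((h1 _ _).2 (Quotient.exact h))
      · intro b
        induction b using Quotient.inductionOn with
        | h x =>
          obtain ⟨y, hy, z, rfl⟩ := h2 x
          exact ⟨Quotient.mk E z, Quotient.sound (E.symm hy)⟩
    exact ⟨Equiv.ofBijective _ hb, fun x => rfl⟩
  · rintro ⟨e, he⟩
    refine ⟨fun x y => ?_, fun x => ?_⟩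
    · constructor
      · intro h
        apply Quotient.exact (s := E)
        rw [he, he, Quotient.sound (s := E) h]
      · intro h
        apply Quotient.exact (s := E)
        apply e.injective
        rw [← he, ← he, Quotient.sound (s := E) h]
    · obtain ⟨y, hy⟩ := Quotient.exists_rep (e.symm (Quotient.mk E x))
      refine ⟨α y, ?_, y, rfl⟩
      apply Quotient.exact (s := E)
      rw [he, hy, e.apply_symm_apply]

theorem exists_injOn {X : Type u} (S T : Set X) (h : Cardinal.mk S ≤ Cardinal.mk T) :
    ∃ g : X → X, Set.InjOn g S ∧ Set.MapsTo g S T := by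
  classical
  obtain ⟨i⟩ := h
  refine ⟨fun x => if hx : x ∈ S then (i ⟨x, hx⟩ : X) else x, ?_, ?_⟩
  · intro x hx y hy hxy
    simp only [hx, hy, dif_pos] at hxy
    exact congrArg Subtype.val (i.injective (Subtype.ext hxy))
  · intro x hx
    simp only [hx, dif_pos]
    exact (i ⟨x, hx⟩).2

/-- When `X/E` is finite, every principal ideal of `reg(T)` is of the form `Q(r)`
with `r A = s A ⁺`, `1 ≤ s A ≤ |A|`. -/
theorem stmt11 {X : Type u} [Nonempty X] (E : Setoid X) [Finite (Quotient E)]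
    (J : Set (X → X)) (hJsub : J ⊆ regT E)
    (hJideal : ∀ α ∈ J, ∀ β ∈ regT E, β ∘ α ∈ J ∧ α ∘ β ∈ J)
    (hprin : ∃ γ ∈ J, J = {f | ∃ l ∈ regT E, ∃ m ∈ regT E, f = m ∘ γ ∘ l}) :
    ∃ s : Quotient E → Cardinal.{u},
      (∀ A : Quotient E, 1 ≤ s A ∧ s A ≤ Cardinal.mk ↥(clsQ E A)) ∧
      J = Qr E (fun A => Order.succ (s A)) := by
  obtain ⟨γ, hγJ, hJ⟩ := hprin
  have hγ := hJsub hγJ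
  obtain ⟨c, hc⟩ := (regT_iff E γ).1 hγ
  refine ⟨fun A => Cardinal.mk ↥(γ '' clsQ E (c.symm A)), fun A => ⟨?_, ?_⟩, ?_⟩
  · rw [Cardinal.one_le_iff_ne_zero, Cardinal.mk_ne_zero_iff]
    obtain ⟨y, hy⟩ := Quotient.exists_rep (c.symm A)
    exact ⟨⟨γ y, y, hy, rfl⟩⟩
  · apply Cardinal.mk_le_mk_of_subset
    rintro _ ⟨x, hx, rfl⟩
    change Quotient.mk E _ = A
    rw [hc, show Quotient.mk E x = _ from hx, c.apply_symm_apply]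
  · apply Set.Subset.antisymm
    · intro f hf
      refine ⟨hJsub hf, ?_⟩
      rw [hJ] at hf
      obtain ⟨l, hl, m, hm, rfl⟩ := hf
      obtain ⟨e, he⟩ := (regT_iff E l).1 hl
      refine ⟨e.trans c, fun A => ?_⟩
      rw [Order.lt_succ_iff]
      refine le_trans (Cardinal.mk_le_mk_of_subset (t := m '' (γ '' clsQ E (e A))) ?_) ?_
      · rintro _ ⟨x, hx, rfl⟩
        refine ⟨_, ⟨l x, ?_, rfl⟩, rfl⟩
        change Quotient.mk E _ = _
        rw [he, show Quotient.mk E x = _ from hx]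
      · simpa using Cardinal.mk_image_le (f := m) (s := γ '' clsQ E (e A))
    · rintro α ⟨hα, σ, hσ⟩
      obtain ⟨a, ha⟩ := (regT_iff E α).1 hα
      simp only [Order.lt_succ_iff] at hσ
      choose g hgi hgm using fun A => exists_injOn _ _ (hσ A)
      have hl : ∀ x, ∃ b, Quotient.mk E b = c.symm (σ (Quotient.mk E x)) ∧
          γ b = g (Quotient.mk E x) (α x) := fun x =>
        hgm (Quotient.mk E x) ⟨x, rfl, rfl⟩
      have hm : ∀ y, ∃ z, Quotient.mk E z = a (σ.symm (Quotient.mk E y)) ∧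
          ∀ x, Quotient.mk E x = σ.symm (Quotient.mk E y) →
            g (Quotient.mk E x) (α x) = y → z = α x := by
        intro y
        by_cases h : ∃ x, Quotient.mk E x = σ.symm (Quotient.mk E y) ∧
            g (Quotient.mk E x) (α x) = y
        · obtain ⟨x, hx, hxy⟩ := h
          refine ⟨α x, by rw [ha, hx], fun x' hx' hxy' => ?_⟩
          have hxx : Quotient.mk E x' = Quotient.mk E x := hx'.trans hx.symm
          apply hgi (Quotient.mk E x) ⟨x, rfl, rfl⟩ ⟨x', hxx, rfl⟩
          rw [hxx] at hxy'
          exact hxy.trans hxy'.symm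
        · obtain ⟨z, hz⟩ := Quotient.exists_rep (a (σ.symm (Quotient.mk E y)))
          exact ⟨z, hz, fun x h1 h2 => (h ⟨x, h1, h2⟩).elim⟩
      choose l hl1 hl2 using hl
      choose m hm1 hm2 using hm
      rw [hJ]
      refine ⟨l, (regT_iff E l).2 ⟨σ.trans c.symm, hl1⟩, m,
        (regT_iff E m).2 ⟨σ.symm.trans a, hm1⟩, ?_⟩
      funext x
      refine (hm2 (γ (l x)) x ?_ (hl2 x).symm).symm
      rw [hc, hl1, c.apply_symm_apply, σ.symm_apply_apply]
end
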